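/- arXiv:math/0511114 — 2 statements merged into one kernel-verified Lean document; each statement's English description precedes it below -/
import Mathlib

section
/- Let n ≥ 1 and let I, I', J, J' ⊆ {1,…,n−1}. If the n-composition of I' is a rearrangement of the n-composition of I (i.e., they have the same multiset of entries) and the n-composition of J' is a rearrangement of the n-composition of J, then the number of permutations f of {1,…,n} with Des(f⁻¹) ⊇ I and Des(f) ⊇ J equals the number of permutations f of {1,…,n} with Des(f⁻¹) ⊇ I' and Des(f) ⊇ J'. -/
/-!
Cut `{1,…,n}` into consecutive blocks whose sizes are the entries of the `n`-composition of a set.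
Then `J ⊆ Des f` says that `f` is decreasing on every `J`-block (`subset_Des_iff`), and
`I ⊆ Des f⁻¹` that `f⁻¹` is decreasing on every `I`-block. To a permutation `f` attach the matrix
counting the `x` in a given `J`-block whose image `f x` lies in a given `I`-block, encoded as a
multiset of label pairs (`pairType`).

Every matrix that arises from some permutation arises from exactly one permutation that is
decreasing on blocks in both directions: existence (`exists_decreasing`) follows by minimizing
`∑ z * f z` among the permutations with the given matrix, uniqueness is `eq_of_pairType_eq`.
Hence the quantity in question is the number of matrices arising from arbitrary permutations
(`card_decreasing_eq`). This number does not depend on the order of the blocks: when two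
compositions are rearrangements of each other, a permutation of positions carries the blocks of
one to the blocks of the other (`exists_relabel`), and the two sets of matrices differ only by a
renaming of rows and columns (`card_range_pairType_relabel`).
-/

/-- The descent set of a permutation `f` of `{1,…,n}` (realized as `Equiv.Perm (Fin n)`
with 1-based positions: position `i` is the index `i-1` of `Fin n`):
`Des f = {i : 1 ≤ i ≤ n-1 and f(i) > f(i+1)}`. -/
def Des {n : ℕ} (f : Equiv.Perm (Fin n)) : Finset ℕ :=
  (Finset.Ico 1 n).filter fun i =>
    ∃ h : i < n, f ⟨i, h⟩ < f ⟨i - 1, Nat.lt_of_le_of_lt (Nat.sub_le i 1) h⟩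

/-- The `n`-composition of a subset `I` of `{1,…,n-1}`: the list
`(p₁, p₂ - p₁, …, p_k - p_{k-1})` where `p₁ < p₂ < … < p_k` is the increasing
enumeration of `{1,…,n} \ I`. -/
def ncomp (n : ℕ) (I : Finset ℕ) : List ℕ :=
  let P := ((Finset.Icc 1 n) \ I).sort (· ≤ ·)
  List.zipWith (· - ·) P (0 :: P)

/-! ### Permutations decreasing on the blocks of two labellings -/

section
variable {n : ℕ} {α β α' β' : Type*}

/-- The multiset of label pairs `(a x, b (f x))`. It encodes the nonnegative integer matrix whose
`(i, j)` entry is the number of `x` in the `a`-block `i` with `f x` in the `b`-block `j`. -/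
def pairType (a : Fin n → α) (b : Fin n → β) (f : Equiv.Perm (Fin n)) : Multiset (α × β) :=
  Finset.univ.val.map fun x => (a x, b (f x))

/-- `f` is strictly decreasing on each fibre (block) of the labelling `a`. -/
def DecreasingOnBlocks (a : Fin n → α) (f : Equiv.Perm (Fin n)) : Prop :=
  ∀ x y, x < y → a x = a y → f y < f x

/-- The sum `∑ z * f z`, a potential that drops whenever a non-inversion of `f` is swapped into
an inversion. -/
def energy (f : Equiv.Perm (Fin n)) : ℕ :=
  ∑ z : Fin n, (z : ℕ) * (f z : ℕ)

theorem energy_inv (f : Equiv.Perm (Fin n)) : energy f⁻¹ = energy f := by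
  unfold energy
  rw [← Equiv.sum_comp f]
  simp [mul_comm]

theorem energy_swap_lt (f : Equiv.Perm (Fin n)) {x y : Fin n} (hxy : x < y) (hf : f x < f y) :
    energy (f * Equiv.swap x y) < energy f := by
  have hne : x ≠ y := hxy.ne
  have key : ∀ F : Fin n → ℕ, ∑ z, F z = F x + F y + ∑ z ∈ (Finset.univ.erase x).erase y, F z := by
    intro F
    rw [← Finset.add_sum_erase Finset.univ F (Finset.mem_univ x),
      ← Finset.add_sum_erase (Finset.univ.erase x) F (a := y) (by simp [hne.symm])]
    ring
  unfold energy
  rw [key, key (fun z => (z : ℕ) * (f z : ℕ))]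
  have hrest : ∑ z ∈ (Finset.univ.erase x).erase y, (z : ℕ) * ((f * Equiv.swap x y) z : ℕ) =
      ∑ z ∈ (Finset.univ.erase x).erase y, (z : ℕ) * (f z : ℕ) := by
    refine Finset.sum_congr rfl fun z hz => ?_
    simp only [Finset.mem_erase] at hz
    simp [Equiv.swap_apply_of_ne_of_ne hz.2.1 hz.1]
  rw [hrest]
  simp only [Equiv.Perm.mul_apply, Equiv.swap_apply_left, Equiv.swap_apply_right]
  have h1 : (x : ℕ) < y := hxy
  have h2 : (f x : ℕ) < f y := hf
  nlinarith

/-- Relabelling through permutations `π`, `ρ` of positions and values only renames the entries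
of the pair type. -/
theorem pairType_relabel {a : Fin n → α} {b : Fin n → β} {a' : Fin n → α'} {b' : Fin n → β'}
    {e : α → α'} {d : β → β'} {π ρ : Equiv.Perm (Fin n)}
    (ha : ∀ x, a' (π x) = e (a x)) (hb : ∀ x, b' (ρ x) = d (b x)) (f : Equiv.Perm (Fin n)) :
    pairType a' b' (ρ * f * π⁻¹) = (pairType a b f).map (Prod.map e d) := by
  unfold pairType
  conv_lhs => rw [← Multiset.map_univ_val_equiv π]
  rw [Multiset.map_map, Multiset.map_map]
  refine Multiset.map_congr rfl fun x _ => ?_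
  simp [ha, hb]

theorem apply_swap_eq {a : Fin n → α} {x y : Fin n} (h : a x = a y) (z : Fin n) :
    a (Equiv.swap x y z) = a z := by
  rw [Equiv.swap_apply_def]
  split_ifs <;> simp_all

/-- Every pair type is attained by a permutation decreasing on the blocks in both directions:
a permutation of least energy with the given pair type has this property, because swapping two
positions (or two values) of one block keeps the pair type. -/
theorem exists_decreasing (a : Fin n → α) (b : Fin n → β) (f : Equiv.Perm (Fin n)) :
    ∃ g, (DecreasingOnBlocks b g⁻¹ ∧ DecreasingOnBlocks a g) ∧
      pairType a b g = pairType a b f := by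
  classical
  obtain ⟨g, hg, hmin⟩ := Finset.exists_min_image
    (Finset.univ.filter fun g => pairType a b g = pairType a b f) energy ⟨f, by simp⟩
  simp only [Finset.mem_filter, Finset.mem_univ, true_and] at hg hmin
  refine ⟨g, ⟨fun x y hxy h => ?_, fun x y hxy h => ?_⟩, hg⟩
  · by_contra hcon
    have hlt : g⁻¹ x < g⁻¹ y :=
      lt_of_le_of_ne (not_lt.1 hcon) fun h => hxy.ne (g⁻¹.injective h)
    have h1 := energy_swap_lt g⁻¹ hxy hlt
    rw [← energy_inv, energy_inv g] at h1
    refine absurd (hmin _ ?_) (not_le.2 h1)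
    have := pairType_relabel (a := a) (b := b) (a' := a) (b' := b) (e := id) (d := id) (π := 1)
      (ρ := Equiv.swap x y) (fun _ => rfl) (apply_swap_eq h) g
    simpa [hg] using this
  · by_contra hcon
    have hlt : g x < g y := lt_of_le_of_ne (not_lt.1 hcon) fun h => hxy.ne (g.injective h)
    refine absurd (hmin _ ?_) (not_le.2 (energy_swap_lt g hxy hlt))
    have := pairType_relabel (a := a) (b := b) (a' := a) (b' := b) (e := id) (d := id) (ρ := 1)
      (π := Equiv.swap x y) (apply_swap_eq h) (fun _ => rfl) g
    simpa [hg] using this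

/-- One half of the fact that `b ∘ f` is determined by the pair type. If `b (f x) < b (g x)`, then
within the block of `x` the points with `b`-label at least `b (g x)` include, for `g`, all points up
to `x`, but, for `f`, only points before `x`; yet both sets have the same size. -/
theorem label_le_of_pairType_eq [LinearOrder β] {a : Fin n → α} {b : Fin n → β}
    (hb : Monotone b) {f g : Equiv.Perm (Fin n)}
    (hf : DecreasingOnBlocks a f) (hg : DecreasingOnBlocks a g)
    (h : pairType a b f = pairType a b g) (x : Fin n) : b (g x) ≤ b (f x) := by
  classical
  by_contra! hlt
  have hcard := congrArg (Multiset.countP fun p : α × β => p.1 = a x ∧ b (g x) ≤ p.2) h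
  simp only [pairType, Multiset.countP_map] at hcard
  change (Finset.univ.filter fun y => a y = a x ∧ b (g x) ≤ b (f y)).card =
    (Finset.univ.filter fun y => a y = a x ∧ b (g x) ≤ b (g y)).card at hcard
  refine hcard.not_lt (Finset.card_lt_card (Finset.ssubset_iff_of_subset ?_ |>.2 ⟨x, ?_, ?_⟩))
  · intro y hy
    simp only [Finset.mem_filter, Finset.mem_univ, true_and] at hy ⊢
    refine ⟨hy.1, ?_⟩
    rcases lt_trichotomy y x with hyx | rfl | hyx
    · exact hb (hg y x hyx hy.1).le
    · exact le_rfl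
    · exact absurd (hy.2.trans (hb (hf x y hyx hy.1.symm).le)) (not_le.2 hlt)
  · simp
  · simpa using hlt

/-- A permutation decreasing on the blocks in both directions is determined by its pair type. Since
`b ∘ f = b ∘ g`, both `f` and `g` list the points by increasing `b`-label and, within a label, by
decreasing position, so `f ∘ g⁻¹` is strictly increasing. -/
theorem eq_of_pairType_eq [LinearOrder β] {a : Fin n → α} {b : Fin n → β}
    (hb : Monotone b) {f g : Equiv.Perm (Fin n)}
    (hf : DecreasingOnBlocks b f⁻¹ ∧ DecreasingOnBlocks a f)
    (hg : DecreasingOnBlocks b g⁻¹ ∧ DecreasingOnBlocks a g)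
    (h : pairType a b f = pairType a b g) : f = g := by
  have hfg : ∀ x, b (f x) = b (g x) := fun x =>
    le_antisymm (label_le_of_pairType_eq hb hg.2 hf.2 h.symm x)
      (label_le_of_pairType_eq hb hf.2 hg.2 h x)
  have hmono : StrictMono (g.symm.trans f) := by
    intro u v huv
    have hu := hfg (g.symm u)
    have hv := hfg (g.symm v)
    simp only [Equiv.apply_symm_apply] at hu hv
    simp only [Equiv.trans_apply]
    by_contra! hle
    have huv' : b u = b v :=
      le_antisymm (hb huv.le) (by rw [← hu, ← hv]; exact hb hle)
    have h1 : g.symm v < g.symm u := hg.1 u v huv huv'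
    have hlt : f (g.symm v) < f (g.symm u) :=
      lt_of_le_of_ne hle fun h => h1.ne (f.injective h)
    have h2 := hf.1 _ _ hlt (by rw [hu, hv, huv'])
    simp only [Equiv.Perm.inv_def, Equiv.symm_apply_apply] at h2
    exact lt_asymm h1 h2
  have hid : (⇑(g.symm.trans f)) = id :=
    (hmono.range_inj strictMono_id).1 (by simp)
  ext x
  have := congrFun hid (g x)
  simp at this
  simp [this]

theorem card_decreasing_eq [LinearOrder β] (a : Fin n → α) {b : Fin n → β} (hb : Monotone b) :
    Nat.card {f : Equiv.Perm (Fin n) // DecreasingOnBlocks b f⁻¹ ∧ DecreasingOnBlocks a f} =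
      Nat.card (Set.range (pairType a b)) := by
  refine Nat.card_eq_of_bijective (fun f => ⟨pairType a b f.1, f.1, rfl⟩) ⟨?_, ?_⟩
  · intro f g h
    exact Subtype.ext (eq_of_pairType_eq hb f.2 g.2 (congrArg Subtype.val h))
  · rintro ⟨_, f, rfl⟩
    obtain ⟨g, hg, h⟩ := exists_decreasing a b f
    exact ⟨⟨g, hg⟩, Subtype.ext h⟩

theorem card_range_pairType_relabel
    {a : Fin n → α} {b : Fin n → β} {a' : Fin n → α'} {b' : Fin n → β'}
    (e : α ≃ α') (d : β ≃ β') (π ρ : Equiv.Perm (Fin n))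
    (ha : ∀ x, a' (π x) = e (a x)) (hb : ∀ x, b' (ρ x) = d (b x)) :
    Nat.card (Set.range (pairType a b)) = Nat.card (Set.range (pairType a' b')) := by
  have hrange : Set.range (pairType a' b') =
      Multiset.map (Prod.map e d) '' Set.range (pairType a b) := by
    ext m
    constructor
    · rintro ⟨f, rfl⟩
      refine ⟨_, ⟨ρ⁻¹ * f * π, rfl⟩, ?_⟩
      rw [← pairType_relabel ha hb]
      congr 1
      group
    · rintro ⟨_, ⟨f, rfl⟩, rfl⟩
      exact ⟨_, pairType_relabel ha hb f⟩
  rw [hrange, Nat.card_image_of_injective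
    (Multiset.map_injective (e.injective.prodMap d.injective))]

end

/-! ### Matching fibres and list entries -/

theorem exists_equiv_of_card_fiber_eq {α β γ : Type*} [Finite α] [Finite β] {u : α → γ} {v : β → γ}
    (h : ∀ c, Nat.card {x // u x = c} = Nat.card {y // v y = c}) :
    ∃ e : α ≃ β, ∀ x, v (e x) = u x :=
  ⟨Equiv.ofFiberEquiv fun c => (Finite.card_eq.1 (h c)).some,
    fun x => Equiv.ofFiberEquiv_map _ x⟩

theorem card_get_fiber {γ : Type*} [DecidableEq γ] (l : List γ) (c : γ) :
    Nat.card {k // l.get k = c} = l.count c := by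
  have h : (Finset.univ.val.map l.get) = (l : Multiset γ) := by
    rw [Fin.univ_val_map, List.ofFn_get]
  rw [← Multiset.coe_count, ← h, Multiset.count_map, Nat.card_eq_fintype_card,
    Fintype.card_subtype]
  simp only [eq_comm]
  rfl

theorem exists_equiv_of_perm {γ : Type*} {l l' : List γ} (h : l.Perm l') :
    ∃ e : Fin l.length ≃ Fin l'.length, ∀ k, l'.get (e k) = l.get k := by
  classical
  exact exists_equiv_of_card_fiber_eq fun c => by
    rw [card_get_fiber, card_get_fiber, h.count_eq]

/-! ### The labelling attached to a subset of `{1,…,n-1}` -/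

/-- The increasing enumeration of `{1,…,n} \ I`. -/
def breaks (n : ℕ) (I : Finset ℕ) : List ℕ :=
  ((Finset.Icc 1 n) \ I).sort (· ≤ ·)

theorem mem_breaks {n : ℕ} {I : Finset ℕ} {p : ℕ} : p ∈ breaks n I ↔ (1 ≤ p ∧ p ≤ n) ∧ p ∉ I := by
  simp [breaks]

theorem length_ncomp (n : ℕ) (I : Finset ℕ) : (ncomp n I).length = (breaks n I).length := by
  simp [ncomp, breaks]

/-- The index (from `0`) of the block containing the `0`-based position `x`: block `k` consists of
the positions `x` with `p_k ≤ x < p_{k+1}`, where `p_0 = 0` and `p_1 < p_2 < …` are the entries of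
`breaks n I`. -/
def blockIdx (n : ℕ) (I : Finset ℕ) (x : ℕ) : ℕ :=
  (breaks n I).findIdx fun p => x < p

theorem blockIdx_mono (n : ℕ) (I : Finset ℕ) : Monotone (blockIdx n I) := by
  intro x y hxy
  by_contra! hlt
  have hlen : blockIdx n I y < (breaks n I).length := hlt.trans_le List.findIdx_le_length
  have h1 : _ = false := List.not_of_lt_findIdx (p := fun p => x < p) hlt
  have h2 : _ = true := List.findIdx_getElem (p := fun p => decide (y < p)) (w := hlen)
  simp only [decide_eq_false_iff_not, decide_eq_true_eq] at h1 h2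
  exact h1 (hxy.trans_lt h2)

theorem blockIdx_eq_iff {n : ℕ} {I : Finset ℕ} {x y : ℕ} (hxy : x ≤ y) (hy : y < n) :
    blockIdx n I x = blockIdx n I y ↔ ∀ i, x < i → i ≤ y → i ∈ I := by
  constructor
  · intro h i hxi hiy
    by_contra hi
    have hmem : i ∈ breaks n I := mem_breaks.2 ⟨⟨by omega, by omega⟩, hi⟩
    obtain ⟨j, hj, rfl⟩ := List.getElem_of_mem hmem
    have h1 : blockIdx n I x ≤ j := by
      by_contra! hlt
      have : _ = false := List.not_of_lt_findIdx (p := fun p => x < p) hlt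
      simp at this
      omega
    have h2 : j < blockIdx n I y := by
      by_contra! hle
      have hlen : blockIdx n I y < (breaks n I).length := by omega
      have h3 : _ = true := List.findIdx_getElem (p := fun p => decide (y < p)) (w := hlen)
      simp only [decide_eq_true_eq] at h3
      have := (Finset.sortedLT_sort (Finset.Icc 1 n \ I)).sortedLE.getElem_le_getElem_of_le
        (hi := hlen) (hj := hj) hle
      change (breaks n I)[blockIdx n I y] ≤ (breaks n I)[j] at this
      have h3' : y < (breaks n I)[blockIdx n I y] := h3
      omega
    omega
  · intro h
    by_contra hne
    have hlt : blockIdx n I x < blockIdx n I y := lt_of_le_of_ne (blockIdx_mono n I hxy) hne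
    have hlen : blockIdx n I x < (breaks n I).length := hlt.trans_le List.findIdx_le_length
    have h1 : _ = true := List.findIdx_getElem (p := fun p => decide (x < p)) (w := hlen)
    have h2 : _ = false := List.not_of_lt_findIdx (p := fun p => y < p) hlt
    simp only [decide_eq_false_iff_not, decide_eq_true_eq, not_lt] at h1 h2
    exact (mem_breaks.1 (List.getElem_mem hlen)).2 (h _ h1 h2)

theorem blockIdx_lt {n : ℕ} (hn : 1 ≤ n) {I : Finset ℕ} (hI : I ⊆ Finset.Icc 1 (n - 1))
    (x : Fin n) : blockIdx n I x < (ncomp n I).length := by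
  rw [length_ncomp]
  refine List.findIdx_lt_length.2 ⟨n, mem_breaks.2 ⟨⟨hn, le_rfl⟩, fun h => ?_⟩, by simp⟩
  have := Finset.mem_Icc.1 (hI h)
  omega

/-- `blockIdx` as an index into the `n`-composition of `I`. -/
def label {n : ℕ} (hn : 1 ≤ n) {I : Finset ℕ} (hI : I ⊆ Finset.Icc 1 (n - 1)) (x : Fin n) :
    Fin (ncomp n I).length :=
  ⟨blockIdx n I x, blockIdx_lt hn hI x⟩

theorem subset_Des_iff {n : ℕ} (hn : 1 ≤ n) {I : Finset ℕ} (hI : I ⊆ Finset.Icc 1 (n - 1))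
    (f : Equiv.Perm (Fin n)) : I ⊆ Des f ↔ DecreasingOnBlocks (label hn hI) f := by
  constructor
  · intro h
    have key : ∀ d x (hx : x + d + 1 < n), (∀ i, x < i → i ≤ x + d + 1 → i ∈ I) →
        f ⟨x + d + 1, hx⟩ < f ⟨x, by omega⟩ := by
      intro d
      induction d with
      | zero =>
        intro x hx hi
        obtain ⟨_, h2⟩ := (Finset.mem_filter.1 (h (hi (x + 1) (by omega) (by omega)))).2
        simpa using h2
      | succ d ih =>
        intro x hx hi
        obtain ⟨_, h2⟩ := (Finset.mem_filter.1 (h (hi (x + d + 2) (by omega) (by omega)))).2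
        exact lt_trans h2 (ih x (by omega) fun i h1 h2 => hi i h1 (by omega))
    rintro ⟨x, hx⟩ ⟨y, hy⟩ hxy hl
    simp only [Fin.mk_lt_mk] at hxy
    obtain ⟨d, rfl⟩ : ∃ d, y = x + d + 1 := ⟨y - x - 1, by omega⟩
    exact key d x hy ((blockIdx_eq_iff hxy.le hy).1 (congrArg Fin.val hl))
  · intro h i hi
    have hi' := Finset.mem_Icc.1 (hI hi)
    refine Finset.mem_filter.2 ⟨Finset.mem_Ico.2 ⟨hi'.1, by omega⟩, by omega, ?_⟩
    refine h _ _ (by simp; omega) (Fin.ext ((blockIdx_eq_iff (by simp) (by simp; omega)).2 ?_))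
    intro j h1 h2
    simp only at h1 h2
    obtain rfl : j = i := by omega
    exact hi

theorem card_label_fiber {n : ℕ} (hn : 1 ≤ n) {I : Finset ℕ} (hI : I ⊆ Finset.Icc 1 (n - 1))
    (k : Fin (ncomp n I).length) :
    Nat.card {x // label hn hI x = k} = (ncomp n I).get k := by
  obtain ⟨k, hk⟩ := k
  have hkl : k < (breaks n I).length := length_ncomp n I ▸ hk
  have hsort : (breaks n I).SortedLT := Finset.sortedLT_sort _
  have hget : (ncomp n I).get ⟨k, hk⟩ = (breaks n I)[k] - (0 :: breaks n I)[k]'(by simp; omega) := by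
    simp [ncomp, breaks]
  have hmem := (mem_breaks.1 (List.getElem_mem hkl)).1
  have hiff : ∀ x : Fin n, label hn hI x = ⟨k, hk⟩ ↔
      (0 :: breaks n I)[k]'(by simp; omega) ≤ (x : ℕ) ∧ (x : ℕ) < (breaks n I)[k] := by
    intro x
    rw [Fin.ext_iff]
    change List.findIdx _ _ = k ↔ _
    rw [List.findIdx_eq hkl, and_comm]
    simp only [decide_eq_true_eq, decide_eq_false_iff_not, not_lt]
    refine and_congr_left fun _ => ?_
    cases k with
    | zero => simp
    | succ k =>
      simp only [List.getElem_cons_succ]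
      refine ⟨fun h => h k (by omega), fun h j hj => ?_⟩
      exact (hsort.sortedLE.getElem_le_getElem_of_le (by omega)).trans h
  rw [hget, ← Nat.card_Ico, Nat.card_eq_fintype_card, Fintype.card_subtype]
  refine Finset.card_bij (fun x _ => (x : ℕ)) ?_ ?_ ?_
  · intro x hx
    simpa [hiff] using hx
  · intro x _ y _ h
    exact Fin.ext h
  · intro y hy
    have hy' := Finset.mem_Ico.1 hy
    exact ⟨⟨y, by omega⟩, by simpa [hiff] using hy', rfl⟩

/-- If the compositions of `I` and `I'` are rearrangements of each other, the two labellings agree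
up to a bijection of labels and a permutation of positions. -/
theorem exists_relabel {n : ℕ} (hn : 1 ≤ n) {I I' : Finset ℕ} (hI : I ⊆ Finset.Icc 1 (n - 1))
    (hI' : I' ⊆ Finset.Icc 1 (n - 1)) (h : (ncomp n I).Perm (ncomp n I')) :
    ∃ (e : Fin (ncomp n I).length ≃ Fin (ncomp n I').length) (π : Equiv.Perm (Fin n)),
      ∀ x, label hn hI' (π x) = e (label hn hI x) := by
  obtain ⟨e, he⟩ := exists_equiv_of_perm h
  obtain ⟨π, hπ⟩ := exists_equiv_of_card_fiber_eq (u := e ∘ label hn hI) (v := label hn hI')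
    fun c => by
      obtain ⟨k, rfl⟩ := e.surjective c
      simp only [Function.comp_apply, e.injective.eq_iff]
      rw [card_label_fiber, card_label_fiber, he]
  exact ⟨e, π, hπ⟩

/-- The number â_{n,I,J} of permutations `f` of `{1,…,n}` with `Des (f⁻¹) ⊇ I` and
`Des f ⊇ J` only depends on the `n`-partitions of `I` and `J`, i.e. it is unchanged
when the `n`-compositions of `I` and `J` are replaced by rearrangements. -/
theorem card_descents_superset_pair_depends_only_on_partitions (n : ℕ) (hn : 1 ≤ n)
    (I I' J J' : Finset ℕ)
    (hI : I ⊆ Finset.Icc 1 (n - 1)) (hI' : I' ⊆ Finset.Icc 1 (n - 1))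
    (hJ : J ⊆ Finset.Icc 1 (n - 1)) (hJ' : J' ⊆ Finset.Icc 1 (n - 1))
    (hII' : (ncomp n I).Perm (ncomp n I')) (hJJ' : (ncomp n J).Perm (ncomp n J')) :
    Nat.card {f : Equiv.Perm (Fin n) // I ⊆ Des f⁻¹ ∧ J ⊆ Des f} =
      Nat.card {f : Equiv.Perm (Fin n) // I' ⊆ Des f⁻¹ ∧ J' ⊆ Des f} := by
  have hmono : ∀ {K : Finset ℕ} (hK : K ⊆ Finset.Icc 1 (n - 1)), Monotone (label hn hK) :=
    fun hK _ _ hxy => blockIdx_mono n _ hxy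
  obtain ⟨d, ρ, hρ⟩ := exists_relabel hn hI hI' hII'
  obtain ⟨e, π, hπ⟩ := exists_relabel hn hJ hJ' hJJ'
  simp only [subset_Des_iff hn hI, subset_Des_iff hn hI', subset_Des_iff hn hJ,
    subset_Des_iff hn hJ']
  rw [card_decreasing_eq _ (hmono hI), card_decreasing_eq _ (hmono hI'),
    card_range_pairType_relabel e d π ρ hπ hρ]
end

section
/- Let n ≥ 1, let I ⊆ {1,…,n−1}, and let J, J' ⊆ {1,…,n−1} be such that the n-composition of J' is a rearrangement of the n-composition of J. Then the number of permutations f of {1,…,n} with Des(f⁻¹) = I and Des(f) ⊇ J equals the number of permutations f of {1,…,n} with Des(f⁻¹) = I and Des(f) ⊇ J'. -/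
open Finset

/-- The index of the block containing the position `i` (both counted from `0`), when positions
`i - 1` and `i` are put into the same block exactly if `i ∈ S`. -/
def blk {n : ℕ} (S : Finset ℕ) (i : Fin n) : ℕ := #(Icc 1 (i : ℕ) \ S)

/-- The pair (block of `i`, value of `v` at `i`), ordered lexicographically; for monotone `β` it is strictly
monotone in `i` exactly when `v` increases strictly on each block. -/
def key {n : ℕ} {α : Type*} (β : Fin n → ℕ) (v : Fin n → α) (i : Fin n) : ℕ ×ₗ α :=
  toLex (β i, v i)

/-- The weak descent set `{i : 1 ≤ i ≤ n-1, u(i) ≥ u(i+1)}` of a word, positions counted from `1`. -/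
def wdes {n : ℕ} (u : Fin n → ℕ) : Finset ℕ :=
  (Ico 1 n).filter fun i =>
    ∃ h : i < n, u ⟨i, h⟩ ≤ u ⟨i - 1, Nat.lt_of_le_of_lt (Nat.sub_le i 1) h⟩

/-- All rearrangements of the word `γ`. -/
def words {n : ℕ} (γ : Fin n → ℕ) : Finset (Fin n → ℕ) :=
  univ.image fun τ : Equiv.Perm (Fin n) => γ ∘ τ

lemma mem_words {n : ℕ} {γ u : Fin n → ℕ} :
    u ∈ words γ ↔ ∃ τ : Equiv.Perm (Fin n), γ ∘ τ = u := by
  simp [words]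

lemma comp_mem_words {n : ℕ} {γ u : Fin n → ℕ} (hu : u ∈ words γ) (g : Equiv.Perm (Fin n)) :
    u ∘ g ∈ words γ := by
  obtain ⟨τ, rfl⟩ := mem_words.1 hu
  exact mem_words.2 ⟨τ * g, rfl⟩

/-! ### Blocks and lexicographic keys -/

lemma blk_mono {n : ℕ} (S : Finset ℕ) : Monotone (blk S : Fin n → ℕ) := by
  intro i j hij
  exact card_le_card (sdiff_subset_sdiff (Icc_subset_Icc_right hij) le_rfl)

lemma blk_step {n : ℕ} (S : Finset ℕ) (i : ℕ) (h : i + 1 < n) :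
    blk S (⟨i + 1, h⟩ : Fin n) =
      blk S (⟨i, by omega⟩ : Fin n) + if i + 1 ∈ S then 0 else 1 := by
  have h1 : Icc 1 (i + 1) = insert (i + 1) (Icc 1 i) := by
    ext x; simp only [mem_Icc, mem_insert]; omega
  simp only [blk]
  rw [h1]
  split_ifs with hS
  · rw [insert_sdiff_of_mem _ hS]; rfl
  · rw [insert_sdiff_of_notMem _ hS, card_insert_of_notMem (by simp)]

lemma strictMono_key_blk_iff {n : ℕ} {α : Type*} [LinearOrder α] (S : Finset ℕ) (v : Fin n → α) :
    StrictMono (key (blk S) v) ↔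
      ∀ i (h : i + 1 < n), i + 1 ∈ S → v ⟨i, by omega⟩ < v ⟨i + 1, h⟩ := by
  cases n with
  | zero => exact ⟨fun _ i h => by omega, fun _ i => i.elim0⟩
  | succ m =>
    rw [Fin.strictMono_iff_lt_succ]
    have step : ∀ i (h : i + 1 < m + 1), key (blk S) v ⟨i, by omega⟩ < key (blk S) v ⟨i + 1, h⟩ ↔
        (i + 1 ∈ S → v ⟨i, by omega⟩ < v ⟨i + 1, h⟩) := by
      intro i h
      simp only [key, Prod.Lex.toLex_lt_toLex, blk_step S i h]
      split_ifs with hS <;> simp [hS]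
    constructor
    · intro H i h
      exact (step i h).1 (H ⟨i, by omega⟩)
    · intro H i
      exact (step i (by omega)).2 (H i (by omega))

lemma key_comp {n : ℕ} {α : Type*} (β : Fin n → ℕ) (v : Fin n → α) (g : Fin n → Fin n) :
    key β v ∘ g = key (β ∘ g) (v ∘ g) := rfl

lemma key_inj {n : ℕ} {α : Type*} {β β' : Fin n → ℕ} {v v' : Fin n → α}
    (h : key β v = key β' v') : β = β' ∧ v = v' := by
  constructor <;> funext i
  · exact congrArg (fun x => (ofLex x).1) (congrFun h i)
  · exact congrArg (fun x => (ofLex x).2) (congrFun h i)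

lemma monotone_of_key {n : ℕ} {α : Type*} [LinearOrder α] {β : Fin n → ℕ} {v : Fin n → α}
    (h : Monotone (key β v)) : Monotone β := by
  intro i j hij
  have := h hij
  simp only [key, Prod.Lex.toLex_le_toLex] at this
  rcases this with h | h
  · exact h.le
  · exact h.1.le

/-- The only monotone rearrangement of a monotone word is the word itself. -/
lemma comp_eq_of_monotone {n : ℕ} {β : Fin n → ℕ} (hβ : Monotone β) {g : Equiv.Perm (Fin n)}
    (h : Monotone (β ∘ g)) : β ∘ g = β :=
  Tuple.unique_monotone (τ := 1) h hβ

/-! ### Permutations as words -/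

lemma subset_Des_iff_s7 {n : ℕ} {J : Finset ℕ} (hJ : J ⊆ Icc 1 (n - 1)) (f : Equiv.Perm (Fin n)) :
    J ⊆ Des f ↔ StrictMono (key (blk J) (OrderDual.toDual ∘ f)) := by
  rw [strictMono_key_blk_iff]
  constructor
  · intro H i h hi
    obtain ⟨_, _, h'⟩ := mem_filter.1 (H hi)
    exact h'
  · intro H i hi
    have := mem_Icc.1 (hJ hi)
    obtain ⟨k, rfl⟩ : ∃ k, i = k + 1 := ⟨i - 1, by omega⟩
    exact mem_filter.2 ⟨mem_Ico.2 (by omega), by omega, H k (by omega) hi⟩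

lemma Des_inv_eq_wdes {n : ℕ} {γ : Fin n → ℕ} (hγ : Monotone γ) {f : Equiv.Perm (Fin n)}
    (hf : StrictMono (key γ (OrderDual.toDual ∘ f))) : Des f⁻¹ = wdes (γ ∘ ⇑f⁻¹) := by
  refine filter_congr fun i hi => exists_congr fun h => ?_
  refine ⟨fun H => hγ H.le, fun H => ?_⟩
  by_contra hlt
  have hi1 := (mem_Ico.1 hi).1
  have hne : f⁻¹ ⟨i - 1, by omega⟩ ≠ f⁻¹ ⟨i, h⟩ := by
    intro he
    have := congrArg Fin.val (f⁻¹.injective he)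
    simp only at this
    omega
  have hlt' : f⁻¹ ⟨i - 1, by omega⟩ < f⁻¹ ⟨i, h⟩ := lt_of_le_of_ne (not_lt.1 hlt) hne
  have hff : ∀ x, f (f⁻¹ x) = x := f.apply_symm_apply
  have := hf hlt'
  simp only [key, Prod.Lex.toLex_lt_toLex, Function.comp_apply, hff] at this H
  rcases this with h1 | h1
  · omega
  · have h2 := h1.2
    rw [OrderDual.toDual_lt_toDual, Fin.lt_def] at h2
    simp only at h2
    omega

/-- Permutations decreasing on the blocks of `γ`, with prescribed descent set of the inverse,
correspond to rearrangements of `γ` with prescribed weak descent set via `f ↦ γ ∘ f⁻¹`; the inverse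
sorts positions by letter, breaking ties from right to left. -/
lemma card_perm_eq_card_word {n : ℕ} {γ : Fin n → ℕ} (hγ : Monotone γ) (I : Finset ℕ) :
    #{f : Equiv.Perm (Fin n) | Des f⁻¹ = I ∧ StrictMono (key γ (OrderDual.toDual ∘ f))} =
      #{u ∈ words γ | wdes u = I} := by
  classical
  refine card_bij (fun f _ => γ ∘ ⇑f⁻¹) ?_ ?_ ?_
  · intro f hf
    obtain ⟨h1, h2⟩ := (mem_filter.1 hf).2
    exact mem_filter.2 ⟨mem_words.2 ⟨f⁻¹, rfl⟩, (Des_inv_eq_wdes hγ h2).symm.trans h1⟩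
  · intro f hf f' hf' heq
    have h2 := (mem_filter.1 hf).2.2
    have h2' := (mem_filter.1 hf').2.2
    set κ := key (γ ∘ ⇑f⁻¹) (OrderDual.toDual : Fin n → (Fin n)ᵒᵈ) with hκ
    have e : κ ∘ f = key γ (OrderDual.toDual ∘ f) := by
      rw [hκ, key_comp]; congr 1; funext i; simp
    have e' : κ ∘ f' = key γ (OrderDual.toDual ∘ f') := by
      rw [hκ, show γ ∘ ⇑f⁻¹ = γ ∘ ⇑f'⁻¹ from heq, key_comp]; congr 1; funext i; simp
    have := Tuple.unique_monotone (f := κ) (e ▸ h2.monotone) (e' ▸ h2'.monotone)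
    rw [e, e'] at this
    refine Equiv.ext fun i => ?_
    exact OrderDual.toDual.injective (congrFun (key_inj this).2 i)
  · intro u hu
    obtain ⟨hu1, hu2⟩ := mem_filter.1 hu
    obtain ⟨σ, rfl⟩ := mem_words.1 hu1
    set κ := key (γ ∘ σ) (OrderDual.toDual : Fin n → (Fin n)ᵒᵈ) with hκ
    have hκi : Function.Injective κ := fun i j h =>
      OrderDual.toDual.injective (congrArg (fun x => (ofLex x).2) h)
    set τ := Tuple.sort κ
    have hm : Monotone (κ ∘ τ) := Tuple.monotone_sort κ
    have hs : StrictMono (κ ∘ τ) := hm.strictMono_of_injective (hκi.comp τ.injective)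
    have hγτ : γ ∘ (σ * τ) = γ := comp_eq_of_monotone hγ (monotone_of_key (by
      rw [hκ, key_comp] at hm; exact hm))
    have hs' : StrictMono (key γ (OrderDual.toDual ∘ τ)) := by
      rw [hκ, key_comp, show (γ ∘ σ) ∘ τ = γ from hγτ] at hs
      exact hs
    have hword : γ ∘ ⇑τ⁻¹ = γ ∘ σ := by
      conv_lhs => rw [← hγτ]
      funext i; simp
    exact ⟨τ, mem_filter.2 ⟨mem_univ _, by rw [Des_inv_eq_wdes hγ hs', hword, hu2], hs'⟩, hword⟩

/-! ### Words strictly increasing on blocks -/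

lemma wdes_subset_iff {n : ℕ} (K : Finset ℕ) (u : Fin n → ℕ) :
    wdes u ⊆ K ↔ StrictMono (key (blk (Icc 1 n \ K)) u) := by
  rw [strictMono_key_blk_iff]
  constructor
  · intro H i h hi
    by_contra hlt
    exact (mem_sdiff.1 hi).2 (H (mem_filter.2 ⟨mem_Ico.2 (by omega), h, not_lt.1 hlt⟩))
  · intro H i hi
    obtain ⟨h0, h, hle⟩ := mem_filter.1 hi
    have := mem_Ico.1 h0
    obtain ⟨k, rfl⟩ : ∃ k, i = k + 1 := ⟨i - 1, by omega⟩
    by_contra hK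
    exact absurd (H k h (mem_sdiff.2 ⟨mem_Icc.2 (by omega), hK⟩)) (not_lt.2 hle)

/-- Every word injective on the blocks of `β` is obtained from a unique word strictly increasing on
the blocks by a unique element of the Young subgroup of `β`. -/
lemma card_strict_mul_card_stabilizer {n : ℕ} {β : Fin n → ℕ} (hβ : Monotone β) (γ : Fin n → ℕ) :
    #{u ∈ words γ | StrictMono (key β u)} * #{g : Equiv.Perm (Fin n) | β ∘ g = β} =
      #{v ∈ words γ | Function.Injective (key β v)} := by
  classical
  rw [← card_product]
  refine card_bij (fun p _ => p.1 ∘ p.2) ?_ ?_ ?_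
  · rintro ⟨u, g⟩ hp
    obtain ⟨hu, hg⟩ := mem_product.1 hp
    obtain ⟨hu1, hu2⟩ := mem_filter.1 hu
    have hg2 := (mem_filter.1 hg).2
    refine mem_filter.2 ⟨comp_mem_words hu1 g, ?_⟩
    have : key β (u ∘ g) = key β u ∘ g := by rw [key_comp, hg2]
    rw [this]
    exact hu2.injective.comp g.injective
  · rintro ⟨u, g⟩ hp ⟨u', g'⟩ hp' heq
    obtain ⟨hu, hg⟩ := mem_product.1 hp
    obtain ⟨hu', hg'⟩ := mem_product.1 hp'
    have hu2 := (mem_filter.1 hu).2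
    have hu2' := (mem_filter.1 hu').2
    have hg2 : β ∘ g = β := (mem_filter.1 hg).2
    have hg2' : β ∘ g' = β := (mem_filter.1 hg').2
    simp only at heq hu2 hu2'
    have e : key β u ∘ g = key β u' ∘ g' := by rw [key_comp, key_comp, hg2, hg2', heq]
    have e1 : key β u = key β u' ∘ (g' * g⁻¹ : Equiv.Perm (Fin n)) := by
      have := congrArg (fun k => k ∘ ⇑g⁻¹) e
      funext i
      simpa using congrFun this i
    have e2 := Tuple.unique_monotone (f := key β u') (σ := g' * g⁻¹) (τ := 1)
      (e1 ▸ hu2.monotone) hu2'.monotone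
    have e3 : key β u = key β u' := e1.trans e2
    have huu : u = u' := (key_inj e3).2
    subst huu
    have : g = g' := Equiv.ext fun i => hu2.injective (congrFun e i)
    rw [this]
  · intro v hv
    obtain ⟨hv1, hv2⟩ := mem_filter.1 hv
    set τ := Tuple.sort (key β v)
    have hm : Monotone (key β v ∘ τ) := Tuple.monotone_sort _
    have hs : StrictMono (key β v ∘ τ) := hm.strictMono_of_injective (hv2.comp τ.injective)
    rw [key_comp] at hm hs
    have hτ : β ∘ τ = β := comp_eq_of_monotone hβ (monotone_of_key hm)
    rw [hτ] at hs
    refine ⟨(v ∘ τ, τ⁻¹), mem_product.2 ⟨mem_filter.2 ⟨comp_mem_words hv1 τ, hs⟩,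
      mem_filter.2 ⟨mem_univ _, ?_⟩⟩, ?_⟩
    · conv_lhs => rw [← hτ]
      funext i; simp
    · funext i; simp

/-- The number of rearrangements of a word that are strictly increasing on the blocks of `β` is
unchanged when the letters are relabelled. -/
lemma card_strict_eq {n : ℕ} {β : Fin n → ℕ} (hβ : Monotone β) {γ γ' : Fin n → ℕ}
    (e : Equiv.Perm ℕ) (τ : Equiv.Perm (Fin n)) (h : γ' ∘ τ = e ∘ γ) :
    #{u ∈ words γ | StrictMono (key β u)} = #{u ∈ words γ' | StrictMono (key β u)} := by
  classical
  have hpos : 0 < #{g : Equiv.Perm (Fin n) | β ∘ g = β} :=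
    card_pos.2 ⟨1, mem_filter.2 ⟨mem_univ _, rfl⟩⟩
  refine Nat.eq_of_mul_eq_mul_right hpos ?_
  rw [card_strict_mul_card_stabilizer hβ, card_strict_mul_card_stabilizer hβ]
  have hinj : ∀ v : Fin n → ℕ,
      Function.Injective (key β (e ∘ v)) ↔ Function.Injective (key β v) := by
    intro v
    simp [Function.Injective, key]
  refine card_bij (fun v _ => e ∘ v) ?_ ?_ ?_
  · intro v hv
    obtain ⟨hv1, hv2⟩ := mem_filter.1 hv
    obtain ⟨ρ, rfl⟩ := mem_words.1 hv1
    refine mem_filter.2 ⟨mem_words.2 ⟨τ * ρ, ?_⟩, (hinj _).2 hv2⟩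
    exact congrArg (fun k => k ∘ ⇑ρ) h
  · intro v _ v' _ heq
    funext i
    exact e.injective (congrFun heq i)
  · intro v hv
    obtain ⟨hv1, hv2⟩ := mem_filter.1 hv
    obtain ⟨ρ, rfl⟩ := mem_words.1 hv1
    have hcomp : e ∘ (γ ∘ (τ⁻¹ * ρ : Equiv.Perm (Fin n))) = γ' ∘ ρ := by
      have := congrArg (fun k => k ∘ ⇑(τ⁻¹ * ρ)) h
      funext i
      simpa using (congrFun this i).symm
    exact ⟨_, mem_filter.2 ⟨mem_words.2 ⟨_, rfl⟩, (hinj _).1 (by rw [hcomp]; exact hv2)⟩, hcomp⟩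

/-- Inclusion-exclusion: the numbers of elements whose set statistic lies inside `K`, for all `K`,
determine the numbers of elements whose statistic equals `K`. -/
lemma card_filter_eq_of_card_filter_subset {α : Type*} (X Y : Finset α) (d : α → Finset ℕ)
    (h : ∀ K, #{x ∈ X | d x ⊆ K} = #{x ∈ Y | d x ⊆ K}) (K : Finset ℕ) :
    #{x ∈ X | d x = K} = #{x ∈ Y | d x = K} := by
  have key : ∀ (Z : Finset α) (K : Finset ℕ),
      #{x ∈ Z | d x ⊆ K} = #{x ∈ Z | d x = K} + ∑ L ∈ K.ssubsets, #{x ∈ Z | d x = L} := by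
    intro Z K
    rw [card_eq_sum_card_fiberwise (f := d) (t := K.powerset)
      (fun x hx => mem_coe.2 (mem_powerset.2 (mem_filter.1 (mem_coe.1 hx)).2))]
    have : ∀ L ∈ K.powerset, #{x ∈ {x ∈ Z | d x ⊆ K} | d x = L} = #{x ∈ Z | d x = L} := by
      intro L hL
      congr 1
      ext x
      simp only [mem_filter]
      have := mem_powerset.1 hL
      constructor
      · rintro ⟨⟨a, _⟩, b⟩; exact ⟨a, b⟩
      · rintro ⟨a, b⟩; exact ⟨⟨a, b ▸ this⟩, b⟩
    rw [sum_congr rfl this, ssubsets, add_sum_erase _ (fun L => #{x ∈ Z | d x = L})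
      (mem_powerset.2 le_rfl)]
  induction K using Finset.strongInduction with
  | H K ih =>
    have h1 := h K
    rw [key X K, key Y K, sum_congr rfl (fun L hL => ih L (mem_ssubsets.1 hL))] at h1
    exact Nat.add_right_cancel h1

/-! ### Block sizes and the composition -/

/-- For a strictly increasing list `P` ending in `N`, the `i ∈ [a, N)` with exactly `b` entries of
`P` at most `i` form the `b`-th gap of `a :: P`. The alternative `a = N` covers the empty list in the
induction; for `b ≥ P.length` both sides are `0`. -/
lemma card_countP_eq_getD (N : ℕ) (P : List ℕ) : ∀ (a b : ℕ), P.Pairwise (· < ·) →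
    (∀ p ∈ P, a ≤ p) → (∀ p ∈ P, p ≤ N) → (N ∈ P ∨ a = N) →
    #{i ∈ Ico a N | P.countP (· ≤ i) = b} = (List.zipWith (· - ·) P (a :: P)).getD b 0 := by
  induction P with
  | nil =>
    intro a b _ _ _ h
    obtain rfl : a = N := by simpa using h
    simp
  | cons p P ih =>
    intro a b hs hlo hhi hN
    obtain ⟨hp, hs'⟩ := List.pairwise_cons.1 hs
    have hap : a ≤ p := hlo p (by simp)
    have hpN : p ≤ N := hhi p (by simp)
    have hzero : ∀ i < p, (p :: P).countP (· ≤ i) = 0 := by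
      intro i hi
      rw [List.countP_eq_zero]
      intro q hq
      rcases List.mem_cons.1 hq with rfl | hq
      · simpa using hi
      · have := hp q hq
        simp only [decide_eq_true_eq]; omega
    have hsucc : ∀ i, p ≤ i → (p :: P).countP (· ≤ i) = P.countP (· ≤ i) + 1 := by
      intro i hi
      simp [hi]
    cases b with
    | zero =>
      have : {i ∈ Ico a N | (p :: P).countP (· ≤ i) = 0} = Ico a p := by
        ext i
        simp only [mem_filter, mem_Ico]
        constructor
        · rintro ⟨⟨h1, h2⟩, h3⟩
          refine ⟨h1, ?_⟩
          by_contra hlt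
          have := hsucc i (by omega)
          omega
        · rintro ⟨h1, h2⟩
          exact ⟨⟨h1, by omega⟩, hzero i h2⟩
      rw [this]
      simp
    | succ b =>
      have : {i ∈ Ico a N | (p :: P).countP (· ≤ i) = b + 1} =
          {i ∈ Ico p N | P.countP (· ≤ i) = b} := by
        ext i
        simp only [mem_filter, mem_Ico]
        constructor
        · rintro ⟨⟨h1, h2⟩, h3⟩
          have hpi : p ≤ i := by
            by_contra hlt
            have := hzero i (by omega)
            omega
          have := hsucc i hpi
          exact ⟨⟨hpi, h2⟩, by omega⟩
        · rintro ⟨⟨h1, h2⟩, h3⟩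
          have := hsucc i h1
          exact ⟨⟨by omega, h2⟩, by omega⟩
      rw [this, ih p b hs' (fun q hq => (hp q hq).le) (fun q hq => hhi q (by simp [hq])) ?_]
      · simp
      · rcases hN with hN | hN
        · rcases List.mem_cons.1 hN with rfl | hN
          · exact Or.inr rfl
          · exact Or.inl hN
        · right; omega

lemma card_blk_fiber {n : ℕ} (hn : 1 ≤ n) {J : Finset ℕ} (hJ : J ⊆ Icc 1 (n - 1)) (b : ℕ) :
    Fintype.card {i : Fin n // blk J i = b} = (ncomp n J).getD b 0 := by
  have hmem : ∀ p, p ∈ (Icc 1 n \ J).sort (· ≤ ·) ↔ (1 ≤ p ∧ p ≤ n) ∧ p ∉ J := by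
    intro p; simp
  rw [ncomp, ← card_countP_eq_getD n _ 0 b (sortedLT_sort _).pairwise (fun _ _ => Nat.zero_le _)
    (fun p hp => ((hmem p).1 hp).1.2)
    (Or.inl ((hmem n).2 ⟨⟨hn, le_rfl⟩, fun h => by have := mem_Icc.1 (hJ h); omega⟩))]
  have hcount : ∀ i < n, ((Icc 1 n \ J).sort (· ≤ ·)).countP (· ≤ i) = #(Icc 1 i \ J) := by
    intro i hi
    rw [← Multiset.coe_countP, sort_eq, Multiset.countP_eq_card_filter]
    change #((Icc 1 n \ J).filter (· ≤ i)) = _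
    congr 1
    ext x
    simp only [mem_filter, mem_sdiff, mem_Icc]
    constructor
    · rintro ⟨⟨h1, h2⟩, h3⟩; exact ⟨by omega, h2⟩
    · rintro ⟨h1, h2⟩; exact ⟨⟨by omega, h2⟩, by omega⟩
  rw [Fintype.card_subtype]
  refine card_bij (fun i _ => (i : ℕ)) ?_ (fun i _ j _ h => Fin.ext h) ?_
  · intro i hi
    refine mem_filter.2 ⟨mem_Ico.2 ⟨Nat.zero_le _, i.2⟩, ?_⟩
    rw [hcount _ i.2]
    exact (mem_filter.1 hi).2
  · intro i hi
    obtain ⟨h1, h2⟩ := mem_filter.1 hi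
    have hin := (mem_Ico.1 h1).2
    rw [hcount _ hin] at h2
    exact ⟨⟨i, hin⟩, mem_filter.2 ⟨mem_univ _, h2⟩, rfl⟩

/-- The permutation of `ℕ` fixing `0` and acting on positive numbers as a shifted copy of `e`. -/
def liftPerm (e : Equiv.Perm ℕ) : Equiv.Perm ℕ where
  toFun b := Nat.casesOn b 0 fun b => e b + 1
  invFun b := Nat.casesOn b 0 fun b => e.symm b + 1
  left_inv b := by cases b <;> simp
  right_inv b := by cases b <;> simp

/-- A rearrangement of lists is realized by a permutation of all of `ℕ`, the lists being padded
with zeros. -/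
lemma exists_perm_getD {L L' : List ℕ} (h : L.Perm L') :
    ∃ e : Equiv.Perm ℕ, ∀ b, L.getD b 0 = L'.getD (e b) 0 := by
  induction h with
  | nil => exact ⟨1, fun _ => rfl⟩
  | cons x _ ih =>
    obtain ⟨e, he⟩ := ih
    refine ⟨liftPerm e, fun b => ?_⟩
    cases b with
    | zero => simp [liftPerm]
    | succ b => simpa [liftPerm] using he b
  | swap x y l =>
    refine ⟨Equiv.swap 0 1, fun b => ?_⟩
    match b with
    | 0 => simp
    | 1 => simp
    | b + 2 => rw [Equiv.swap_apply_of_ne_of_ne (by omega) (by omega)]; simp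
  | trans _ _ ih1 ih2 =>
    obtain ⟨e1, h1⟩ := ih1
    obtain ⟨e2, h2⟩ := ih2
    exact ⟨e1.trans e2, fun b => (h1 b).trans (h2 _)⟩

lemma exists_letter_perm {n : ℕ} (hn : 1 ≤ n) {J J' : Finset ℕ} (hJ : J ⊆ Icc 1 (n - 1))
    (hJ' : J' ⊆ Icc 1 (n - 1)) (h : (ncomp n J).Perm (ncomp n J')) :
    ∃ (e : Equiv.Perm ℕ) (τ : Equiv.Perm (Fin n)), blk J' ∘ τ = e ∘ blk J := by
  obtain ⟨e, he⟩ := exists_perm_getD h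
  have fib : ∀ c, Nonempty ({i : Fin n // e (blk J i) = c} ≃ {i : Fin n // blk J' i = c}) := by
    intro c
    rw [← Fintype.card_eq, card_blk_fiber hn hJ', ← e.apply_symm_apply c, ← he,
      ← card_blk_fiber hn hJ]
    exact Fintype.card_congr (Equiv.subtypeEquivRight fun i => by
      rw [e.apply_symm_apply, Equiv.eq_symm_apply])
  refine ⟨e, Equiv.ofFiberEquiv fun c => (fib c).some, funext fun i => ?_⟩
  exact Equiv.ofFiberEquiv_map _ i

/-- The number a_{n,I,J} of permutations `f` of `{1,…,n}` with `Des (f⁻¹) = I` and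
`Des f ⊇ J` only depends on `I` and the `n`-partition of `J`, i.e. it is unchanged
when the `n`-composition of `J` is replaced by a rearrangement. -/
theorem card_descents_eq_superset_depends_only_on_partition (n : ℕ) (hn : 1 ≤ n)
    (I J J' : Finset ℕ) (hI : I ⊆ Finset.Icc 1 (n - 1))
    (hJ : J ⊆ Finset.Icc 1 (n - 1)) (hJ' : J' ⊆ Finset.Icc 1 (n - 1))
    (hJJ' : (ncomp n J).Perm (ncomp n J')) :
    Nat.card {f : Equiv.Perm (Fin n) // Des f⁻¹ = I ∧ J ⊆ Des f} =
      Nat.card {f : Equiv.Perm (Fin n) // Des f⁻¹ = I ∧ J' ⊆ Des f} := by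
  classical
  obtain ⟨e, τ, h⟩ := exists_letter_perm hn hJ hJ' hJJ'
  have red : ∀ S : Finset ℕ, S ⊆ Icc 1 (n - 1) →
      Nat.card {f : Equiv.Perm (Fin n) // Des f⁻¹ = I ∧ S ⊆ Des f} =
        #{u ∈ words (blk S : Fin n → ℕ) | wdes u = I} := by
    intro S hS
    rw [← card_perm_eq_card_word (blk_mono S) I, Nat.card_eq_fintype_card, Fintype.card_subtype]
    simp only [subset_Des_iff_s7 hS]
  rw [red J hJ, red J' hJ']
  refine card_filter_eq_of_card_filter_subset _ _ _ (fun K => ?_) I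
  simp only [wdes_subset_iff]
  exact card_strict_eq (blk_mono _) e τ h
end
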